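/- The range of the splitting map σ on words over {l,r} is exactly the set of nonempty words: a word w' lies in the image of σ if and only if w' ≠ ε. Hence σ is a bijection from the set of all words over {l,r} onto the set of nonempty words over {l,r}. -/

import Mathlib

/-- The two-letter alphabet {l, r}. -/
inductive Letter : Type
  | l : Letter
  | r : Letter
deriving DecidableEq

/-- The splitting map σ on words over {l,r}: `σ(ε) = l`, `σ(l·rⁿ) = l·rⁿ⁺¹`,
and `σ(w) = w` for every other word `w`. -/
def sigma : List Letter → List Letter
  | [] => [Letter.l]
  | Letter.l :: t =>
      if t = List.replicate t.length Letter.r then Letter.l :: (t ++ [Letter.r])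
      else Letter.l :: t
  | w => w

theorem sig_nil : sigma [] = [Letter.l] := rfl

theorem sig_r (t : List Letter) : sigma (Letter.r :: t) = Letter.r :: t := rfl

theorem sig_pos (t : List Letter) (h : ∀ b ∈ t, b = Letter.r) :
    sigma (Letter.l :: t) = Letter.l :: (t ++ [Letter.r]) := by
  simp only [sigma]
  rw [if_pos (List.eq_replicate_length.2 h)]

theorem sig_neg (t : List Letter) (h : ¬ ∀ b ∈ t, b = Letter.r) :
    sigma (Letter.l :: t) = Letter.l :: t := by
  simp only [sigma]
  rw [if_neg (fun e => h (List.eq_replicate_length.1 e))]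

theorem sig_ne (w : List Letter) : sigma w ≠ [] := by
  rcases w with _ | ⟨_ | _, t⟩
  · simp [sig_nil]
  · by_cases h : ∀ b ∈ t, b = Letter.r
    · simp [sig_pos t h]
    · simp [sig_neg t h]
  · simp [sig_r]

theorem sig_surj (w : List Letter) (hw : w ≠ []) : ∃ v, sigma v = w := by
  rcases w with _ | ⟨_ | _, t⟩
  · exact absurd rfl hw
  · by_cases h : ∀ b ∈ t, b = Letter.r
    · rcases List.eq_nil_or_concat t with rfl | ⟨s, a, rfl⟩
      · exact ⟨[], rfl⟩
      · have ha : a = Letter.r := h a (by simp)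
        subst ha
        exact ⟨Letter.l :: s, by
          rw [sig_pos s (fun b hb => h b (by simp [hb]))]
          try simp⟩
    · exact ⟨_, sig_neg t h⟩
  · exact ⟨_, sig_r t⟩

theorem sig_inj : Function.Injective sigma := by
  intro v w e
  rcases v with _ | ⟨_ | _, s⟩ <;> rcases w with _ | ⟨_ | _, t⟩
  · rfl
  · by_cases h : ∀ b ∈ t, b = Letter.r
    · simp [sig_nil, sig_pos t h] at e
    · rw [sig_nil, sig_neg t h] at e
      simp at e
      subst e
      simp at h
  · simp [sig_nil, sig_r] at e
  · by_cases h : ∀ b ∈ s, b = Letter.r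
    · simp [sig_nil, sig_pos s h] at e
    · rw [sig_nil, sig_neg s h] at e
      simp at e
      subst e
      simp at h
  · by_cases h : ∀ b ∈ s, b = Letter.r <;> by_cases k : ∀ b ∈ t, b = Letter.r
    · rw [sig_pos s h, sig_pos t k] at e
      simpa using e
    · rw [sig_pos s h, sig_neg t k] at e
      have e' : s ++ [Letter.r] = t := by simpa using e
      subst e'
      exact absurd (by simpa [or_imp, forall_and] using h) k
    · rw [sig_neg s h, sig_pos t k] at e
      have e' : s = t ++ [Letter.r] := by simpa using e
      subst e'
      exact absurd (by simpa [or_imp, forall_and] using k) h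
    · rwa [sig_neg s h, sig_neg t k] at e
  · by_cases h : ∀ b ∈ s, b = Letter.r
    · simp [sig_r, sig_pos s h] at e
    · simp [sig_r, sig_neg s h] at e
  · simp [sig_nil, sig_r] at e
  · by_cases h : ∀ b ∈ t, b = Letter.r
    · simp [sig_r, sig_pos t h] at e
    · simp [sig_r, sig_neg t h] at e
  · exact e

/-- The image of σ is exactly the set of nonempty words; hence σ is a bijection
from the set of all words onto the set of nonempty words. -/
theorem sigma_range :
    (∀ w' : List Letter, w' ∈ Set.range sigma ↔ w' ≠ []) ∧
    Set.BijOn sigma Set.univ {w : List Letter | w ≠ []} := by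
  refine ⟨fun w => ⟨?_, fun h => sig_surj w h⟩, fun w _ => sig_ne w, sig_inj.injOn, ?_⟩
  · rintro ⟨v, rfl⟩
    exact sig_ne v
  · intro w hw
    obtain ⟨v, hv⟩ := sig_surj w hw
    exact ⟨v, trivial, hv⟩
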